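/- Let k, ℓ, t, q be positive integers with k ≥ 4. There exist a constant C = C(k,ℓ,t,q) and an integer n₀ = n₀(k,ℓ) such that for every integer n ≥ n₀: every family F ⊆ binom([n],k) with |F| ≥ t·C(n,k−1) + C·n^{k−2+2/(k−1)} contains a copy of the k-uniform linear path P^{(k)}_ℓ or a copy of the k-blowup [K_{t+1,q}]^{(k)} of the complete bipartite graph K_{t+1,q}. -/

import Mathlib

open Finset

/-- The family `F` of k-sets contains a k-uniform linear path of length ℓ:
distinct members `P 0, …, P (ℓ-1)` with consecutive members meeting in exactly one
vertex and non-consecutive members disjoint. -/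
def ContainsLinearPath (k ℓ : ℕ) {n : ℕ} (F : Finset (Finset (Fin n))) : Prop :=
  ∃ P : Fin ℓ → Finset (Fin n), Function.Injective P ∧
    (∀ i, P i ∈ F) ∧ (∀ i, (P i).card = k) ∧
    (∀ i j : Fin ℓ, (i : ℕ) + 1 = (j : ℕ) → (P i ∩ P j).card = 1) ∧
    (∀ i j : Fin ℓ, (i : ℕ) + 1 < (j : ℕ) → P i ∩ P j = ∅)

/-- The family `F` of k-sets contains a copy of the k-blowup `H^{(k)}` of the graph `H`. -/
def ContainsBlowup (k : ℕ) {α : Type*} (H : SimpleGraph α) {n : ℕ}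
    (F : Finset (Finset (Fin n))) : Prop :=
  ∃ φ : α → Fin n, Function.Injective φ ∧
    ∃ E : Sym2 α → Finset (Fin n),
      (∀ e ∈ H.edgeSet, E e ∈ F ∧ (E e).card = k ∧ ∀ a : α, (a ∈ e ↔ φ a ∈ E e)) ∧
      (∀ e ∈ H.edgeSet, ∀ e' ∈ H.edgeSet, e ≠ e' →
        ∀ v, v ∈ E e → v ∈ E e' → ∃ a : α, a ∈ e ∧ a ∈ e' ∧ v = φ a)

def Ker {V : Type*} [DecidableEq V] (s : ℕ) (F : Finset (Finset V)) (A : Finset V) : Prop :=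
  ∀ U : Finset V, U.card ≤ s → ∃ E ∈ F, A ⊆ E ∧ Disjoint (E \ A) U

def KAdj {V : Type*} [DecidableEq V] (s : ℕ) (F : Finset (Finset V)) (u v : V) : Prop :=
  u ≠ v ∧ Ker s F {u, v}

theorem Ker.mono {V : Type*} [DecidableEq V] {s : ℕ} {F G : Finset (Finset V)} {A : Finset V}
    (h : Ker s G A) (hGF : G ⊆ F) : Ker s F A := by
  intro U hU
  obtain ⟨E, hE, h1⟩ := h U hU
  exact ⟨E, hGF hE, h1⟩

theorem KAdj.symm {V : Type*} [DecidableEq V] {s : ℕ} {F : Finset (Finset V)} {u v : V}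
    (h : KAdj s F u v) : KAdj s F v u :=
  ⟨h.1.symm, by rw [Finset.pair_comm]; exact h.2⟩

theorem ker_embed {V ι : Type*} [DecidableEq V] [DecidableEq ι] {s k : ℕ}
    {F : Finset (Finset V)} (hF : ∀ E ∈ F, E.card = k) (A : ι → Finset V) (W : Finset V)
    (T : Finset ι) (hA : ∀ i ∈ T, Ker s F (A i)) (hW : ∀ i ∈ T, A i ⊆ W)
    (hs : W.card + k * T.card ≤ s) :
    ∃ E : ι → Finset V, (∀ i ∈ T, E i ∈ F ∧ A i ⊆ E i ∧ E i ∩ W ⊆ A i) ∧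
      ∀ i ∈ T, ∀ j ∈ T, i ≠ j → E i ∩ E j ⊆ A i ∩ A j := by
  induction T using Finset.induction_on with
  | empty => exact ⟨fun _ => ∅, by simp, by simp⟩
  | insert i0 T hi0 ih =>
    rw [Finset.card_insert_of_notMem hi0] at hs
    obtain ⟨E, hE1, hE2⟩ := ih (fun i hi => hA i (Finset.mem_insert_of_mem hi))
      (fun i hi => hW i (Finset.mem_insert_of_mem hi)) (by nlinarith)
    have hcard : (W ∪ T.biUnion E).card ≤ s := by
      have h1 : (T.biUnion E).card ≤ T.card * k :=
        Finset.card_biUnion_le_card_mul _ _ _ (fun i hi => (hF _ (hE1 i hi).1).le)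
      have := Finset.card_union_le W (T.biUnion E)
      nlinarith
    obtain ⟨E0, hE0, hA0, hd⟩ := hA i0 (Finset.mem_insert_self _ _) _ hcard
    have hW0 := hW i0 (Finset.mem_insert_self _ _)
    have key : ∀ v ∈ E0, v ∉ A i0 → v ∉ W ∧ ∀ j ∈ T, v ∉ E j := by
      intro v hv hvA
      have := Finset.disjoint_left.mp hd (Finset.mem_sdiff.mpr ⟨hv, hvA⟩)
      simp only [Finset.mem_union, Finset.mem_biUnion, not_or, not_exists, not_and] at this
      exact this
    have hne : ∀ j ∈ T, j ≠ i0 := fun j hj h => hi0 (h ▸ hj)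
    have key2 : ∀ j ∈ T, E0 ∩ E j ⊆ A i0 ∩ A j := by
      intro j hj v hv
      rw [Finset.mem_inter] at hv ⊢
      have h1 : v ∈ A i0 := by
        by_contra h
        exact (key v hv.1 h).2 j hj hv.2
      exact ⟨h1, (hE1 j hj).2.2 (Finset.mem_inter.mpr ⟨hv.2, hW0 h1⟩)⟩
    refine ⟨Function.update E i0 E0, ?_, ?_⟩
    · intro i hi
      rcases Finset.mem_insert.mp hi with rfl | hi
      · simp only [Function.update_self]
        refine ⟨hE0, hA0, ?_⟩
        intro v hv
        rw [Finset.mem_inter] at hv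
        by_contra h
        exact (key v hv.1 h).1 hv.2
      · rw [Function.update_of_ne (hne i hi)]
        exact hE1 i hi
    · intro i hi j hj hij
      rcases Finset.mem_insert.mp hi with rfl | hi'
      · rcases Finset.mem_insert.mp hj with rfl | hj'
        · exact absurd rfl hij
        · rw [Function.update_self, Function.update_of_ne (hne j hj')]
          exact key2 j hj'
      · rcases Finset.mem_insert.mp hj with rfl | hj'
        · rw [Function.update_self, Function.update_of_ne (hne i hi'), Finset.inter_comm,
            Finset.inter_comm (A i)]
          exact key2 i hi'
        · rw [Function.update_of_ne (hne i hi'), Function.update_of_ne (hne j hj')]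
          exact hE2 i hi' j hj' hij

theorem path_of_kadj {n k ℓ s : ℕ} (hk : 4 ≤ k) {F : Finset (Finset (Fin n))}
    (hF : ∀ E ∈ F, E.card = k) (p : ℕ → Fin n)
    (hinj : ∀ i ≤ ℓ, ∀ j ≤ ℓ, p i = p j → i = j)
    (hadj : ∀ i < ℓ, KAdj s F (p i) (p (i + 1))) (hs : (ℓ + 1) + k * ℓ ≤ s) :
    ContainsLinearPath k ℓ F := by
  obtain ⟨E, hE1, hE2⟩ := ker_embed hF (fun i : Fin ℓ => ({p i, p (i + 1)} : Finset (Fin n)))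
    ((Finset.range (ℓ + 1)).image p) Finset.univ (fun i _ => (hadj i i.2).2)
    (by
      intro i _ v hv
      have := i.2
      simp only [Finset.mem_insert, Finset.mem_singleton] at hv
      rcases hv with rfl | rfl
      · exact Finset.mem_image_of_mem _ (Finset.mem_range.mpr (by omega))
      · exact Finset.mem_image_of_mem _ (Finset.mem_range.mpr (by omega)))
    (by
      have := Finset.card_image_le (s := Finset.range (ℓ + 1)) (f := p)
      rw [Finset.card_range] at this
      rw [Finset.card_univ, Fintype.card_fin]
      omega)
  have hE1' := fun i => hE1 i (Finset.mem_univ i)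
  have hE2' := fun i j => hE2 i (Finset.mem_univ i) j (Finset.mem_univ j)
  refine ⟨E, ?_, fun i => (hE1' i).1, fun i => hF _ (hE1' i).1, ?_, ?_⟩
  · intro i j hij
    by_contra hne
    have h := hE2' i j hne
    rw [hij, Finset.inter_self] at h
    have h2 := Finset.card_le_card (h.trans Finset.inter_subset_left)
    rw [hF _ (hE1' j).1] at h2
    have := Finset.card_le_two (a := p i) (b := p (i+1))
    omega
  · intro i j hij
    have hne : i ≠ j := by intro h; subst h; omega
    rw [Finset.card_eq_one]
    refine ⟨p j, ?_⟩
    apply Finset.Subset.antisymm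
    · intro v hv
      have h := hE2' i j hne hv
      simp only [Finset.mem_inter, Finset.mem_insert, Finset.mem_singleton] at h
      rw [Finset.mem_singleton]
      have hi := i.2
      have hj := j.2
      rcases h with ⟨h1 | h1, h2 | h2⟩
      · exact h2
      · have := hinj i (by omega) (j + 1) (by omega) (h1.symm.trans h2)
        omega
      · exact h2
      · rw [h1, hij]
    · intro v hv
      rw [Finset.mem_singleton] at hv
      subst hv
      rw [Finset.mem_inter]
      exact ⟨(hE1' i).2.1 (by simp [hij]), (hE1' j).2.1 (by simp)⟩
  · intro i j hij
    have hne : i ≠ j := by intro h; subst h; omega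
    rw [Finset.eq_empty_iff_forall_notMem]
    intro v hv
    have h := hE2' i j hne hv
    simp only [Finset.mem_inter, Finset.mem_insert, Finset.mem_singleton] at h
    have hi := i.2
    have hj := j.2
    rcases h with ⟨h1 | h1, h2 | h2⟩
    all_goals
      have := hinj _ (by omega) _ (by omega) (h1.symm.trans h2)
      omega

theorem blowup_of_kadj {n k t q s : ℕ} {F : Finset (Finset (Fin n))}
    (hF : ∀ E ∈ F, E.card = k) (a : Fin (t + 1) → Fin n) (b : Fin q → Fin n)
    (ha : Function.Injective a) (hb : Function.Injective b)
    (hadj : ∀ i j, KAdj s F (a i) (b j))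
    (hs : (t + 1 + q) + k * Fintype.card (Sym2 (Fin (t + 1) ⊕ Fin q)) ≤ s) :
    ContainsBlowup k (completeBipartiteGraph (Fin (t + 1)) (Fin q)) F := by
  classical
  set φ : Fin (t + 1) ⊕ Fin q → Fin n := Sum.elim a b with hφ
  have hinj : Function.Injective φ := Function.Injective.sumElim ha hb (fun i j => (hadj i j).1)
  set H := completeBipartiteGraph (Fin (t + 1)) (Fin q) with hH
  have hadjH : ∀ x y, H.Adj x y → KAdj s F (φ x) (φ y) := by
    intro x y hxy
    rcases x with x | x <;> rcases y with y | y <;> simp [hH, hφ] at hxy ⊢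
    · exact hadj _ _
    · exact (hadj _ _).symm
  obtain ⟨E, hE1, hE2⟩ := ker_embed hF
    (fun e : Sym2 (Fin (t + 1) ⊕ Fin q) => (Finset.univ.filter (fun x => x ∈ e)).image φ)
    (Finset.univ.image φ) (Finset.univ.filter (fun e => e ∈ H.edgeSet))
    (by
      intro e he
      simp only [Finset.mem_filter, Finset.mem_univ, true_and] at he
      induction e using Sym2.ind with
      | _ x y =>
        rw [SimpleGraph.mem_edgeSet] at he
        have h := (hadjH x y he).2
        convert h using 1
        ext v
        simp only [Finset.mem_image, Finset.mem_filter, Finset.mem_univ, true_and, Sym2.mem_iff,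
          Finset.mem_insert, Finset.mem_singleton]
        constructor
        · rintro ⟨z, rfl | rfl, rfl⟩ <;> simp
        · rintro (rfl | rfl)
          · exact ⟨x, Or.inl rfl, rfl⟩
          · exact ⟨y, Or.inr rfl, rfl⟩)
    (fun e _ => Finset.image_subset_image (Finset.filter_subset _ _))
    (by
      have h1 := Finset.card_image_le (s := Finset.univ) (f := φ)
      rw [Finset.card_univ, Fintype.card_sum, Fintype.card_fin, Fintype.card_fin] at h1
      have h2 := Finset.card_le_univ
        (Finset.univ.filter (fun e : Sym2 (Fin (t + 1) ⊕ Fin q) => e ∈ H.edgeSet))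
      nlinarith)
  simp only [Finset.mem_filter, Finset.mem_univ, true_and] at hE1 hE2
  refine ⟨φ, hinj, E, ?_, ?_⟩
  · intro e he
    obtain ⟨h1, h2, h3⟩ := hE1 e he
    refine ⟨h1, hF _ h1, fun x => ⟨fun hx => h2 ?_, fun hx => ?_⟩⟩
    · exact Finset.mem_image_of_mem _ (by simpa using hx)
    · have := h3 (Finset.mem_inter.mpr ⟨hx, Finset.mem_image_of_mem _ (Finset.mem_univ x)⟩)
      simp only [Finset.mem_image, Finset.mem_filter, Finset.mem_univ, true_and] at this
      obtain ⟨z, hz, hzx⟩ := this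
      rwa [← hinj hzx]
  · intro e he e' he' hne v hv hv'
    have := hE2 e he e' he' hne (Finset.mem_inter.mpr ⟨hv, hv'⟩)
    simp only [Finset.mem_inter, Finset.mem_image, Finset.mem_filter, Finset.mem_univ,
      true_and] at this
    obtain ⟨⟨z, hz, hzx⟩, ⟨w, hw, hwx⟩⟩ := this
    have : z = w := hinj (hzx.trans hwx.symm)
    subst this
    exact ⟨z, hz, hw, hzx.symm⟩

/-- A path given by a list. -/
def HasPath {V : Type*} (r : V → V → Prop) (m : ℕ) : Prop :=
  ∃ l : List V, l.Nodup ∧ l.IsChain r ∧ l.length = m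

theorem greedy_path {V : Type*} [DecidableEq V] {r : V → V → Prop} (hr : ∀ u v, r u v → r v u)
    (X : Set V) (hX : X.Nonempty) (m : ℕ)
    (hstep : ∀ v ∈ X, ∀ U : Finset V, v ∈ U → U.card ≤ m →
      (∃ w ∈ X, w ∉ U ∧ r v w) ∨ (∃ x, x ∉ U ∧ ∃ w ∈ X, w ∉ U ∧ x ≠ w ∧ r v x ∧ r x w)) :
    HasPath r m := by
  have main : ∀ j, j ≤ m → ∃ v l, (v :: l).Nodup ∧ (v :: l).IsChain r ∧ v ∈ X ∧
      j ≤ (v :: l).length ∧ (v :: l).length ≤ j + 1 := by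
    intro j
    induction j with
    | zero =>
      intro _
      obtain ⟨v, hv⟩ := hX
      exact ⟨v, [], by simp, by simp, hv, by simp, by simp⟩
    | succ j ih =>
      intro hj
      obtain ⟨v, l, h1, h2, h3, h4, h5⟩ := ih (by omega)
      by_cases hlen : (v :: l).length = j + 1
      · exact ⟨v, l, h1, h2, h3, by omega, by omega⟩
      have hc : (v :: l).toFinset.card ≤ m := (List.toFinset_card_le _).trans (by omega)
      rcases hstep v h3 (v :: l).toFinset (by simp) hc with ⟨w, hw, hwU, hvw⟩ |
        ⟨x, hxU, w, hw, hwU, hxw, hvx, hxw'⟩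
      · rw [List.mem_toFinset] at hwU
        refine ⟨w, v :: l, List.nodup_cons.mpr ⟨hwU, h1⟩, ?_, hw, ?_, ?_⟩
        · exact List.isChain_cons_cons.mpr ⟨hr _ _ hvw, h2⟩
        · simp only [List.length_cons] at *; omega
        · simp only [List.length_cons] at *; omega
      · rw [List.mem_toFinset] at hwU hxU
        refine ⟨w, x :: v :: l, ?_, ?_, hw, ?_, ?_⟩
        · refine List.nodup_cons.mpr ⟨?_, List.nodup_cons.mpr ⟨hxU, h1⟩⟩
          rw [List.mem_cons, not_or]
          exact ⟨hxw.symm, hwU⟩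
        · exact List.isChain_cons_cons.mpr ⟨hr _ _ hxw',
            List.isChain_cons_cons.mpr ⟨hr _ _ hvx, h2⟩⟩
        · simp only [List.length_cons] at *; omega
        · simp only [List.length_cons] at *; omega
  obtain ⟨v, l, h1, h2, h3, h4, h5⟩ := main m le_rfl
  refine ⟨(v :: l).take m, h1.sublist (List.take_sublist _ _), h2.take _, ?_⟩
  rw [List.length_take]
  omega

theorem path_of_hasPath {n k ℓ s : ℕ} (hk : 4 ≤ k) {F : Finset (Finset (Fin n))}
    (hF : ∀ E ∈ F, E.card = k) (h : HasPath (KAdj s F) (ℓ + 1)) (hs : (ℓ + 1) + k * ℓ ≤ s) :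
    ContainsLinearPath k ℓ F := by
  obtain ⟨l, h1, h2, h3⟩ := h
  have h0 : 0 < l.length := by omega
  refine path_of_kadj hk hF (fun i => l.getD i l[0]) ?_ ?_ hs
  · intro i hi j hj hij
    rw [List.getD_eq_getElem _ _ (by omega), List.getD_eq_getElem _ _ (by omega)] at hij
    exact (List.Nodup.getElem_inj_iff h1).mp hij
  · intro i hi
    rw [List.getD_eq_getElem _ _ (by omega), List.getD_eq_getElem _ _ (by omega)]
    exact List.isChain_iff_getElem.mp h2 i (by omega)

theorem degen {V ι : Type*} [DecidableEq V] [DecidableEq ι] (M : ℕ) (S : ι → Finset V) :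
    ∀ (V0 : Finset V) (I : Finset ι), (∀ i ∈ I, S i ⊆ V0) → M * V0.card < I.card →
    ∃ I' ⊆ I, I'.Nonempty ∧ ∀ i ∈ I', ∀ v ∈ S i, M < (I'.filter (fun j => v ∈ S j)).card := by
  intro V0
  induction V0 using Finset.strongInduction with
  | H V0 ih =>
    intro I hI hc
    by_cases h : ∀ i ∈ I, ∀ v ∈ S i, M < (I.filter (fun j => v ∈ S j)).card
    · exact ⟨I, Finset.Subset.refl _, Finset.card_pos.mp (by omega), h⟩
    · push Not at h
      obtain ⟨i, hi, v, hv, hle⟩ := h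
      have hvV := hI i hi hv
      obtain ⟨I', h1, h2⟩ := ih (V0.erase v) (Finset.erase_ssubset hvV)
        (I.filter (fun j => v ∉ S j))
        (by
          intro j hj w hw
          rw [Finset.mem_filter] at hj
          refine Finset.mem_erase.mpr ⟨?_, hI j hj.1 hw⟩
          rintro rfl
          exact hj.2 hw)
        (by
          have e1 := Finset.card_filter_add_card_filter_not (s := I) (fun j => v ∈ S j)
          have e2 := Finset.card_erase_add_one hvV
          rw [← e2] at hc
          nlinarith)
      exact ⟨I', h1.trans (Finset.filter_subset _ _), h2⟩

theorem edges_bound {V : Type*} [DecidableEq V] [Fintype V] {r : V → V → Prop} [DecidableRel r]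
    (hr : ∀ u v, r u v → r v u) (m : ℕ) (hno : ¬ HasPath r m) :
    ((Finset.univ : Finset (V × V)).filter (fun p => r p.1 p.2)).card ≤
      (m ^ 2) * Fintype.card V := by
  by_contra hcon
  push Not at hcon
  obtain ⟨I', hI, ⟨i0, hi0⟩, hdeg⟩ := degen (m ^ 2) (fun p : V × V => ({p.1, p.2} : Finset V))
    Finset.univ _ (fun _ _ => Finset.subset_univ _) (by rw [Finset.card_univ]; exact hcon)
  apply hno
  refine greedy_path hr {v | ∃ i ∈ I', v ∈ ({i.1, i.2} : Finset V)}
    ⟨i0.1, i0, hi0, by simp⟩ m ?_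
  rintro v ⟨i, hi, hv⟩ U hvU hU
  left
  have h1 := hdeg i hi v hv
  have h2 : ¬ (I'.filter (fun j => v ∈ ({j.1, j.2} : Finset V)) ⊆ U ×ˢ U) := by
    intro hsub
    have := Finset.card_le_card hsub
    rw [Finset.card_product] at this
    nlinarith
  rw [Finset.not_subset] at h2
  obtain ⟨⟨a, b⟩, hj, hjU⟩ := h2
  rw [Finset.mem_filter] at hj
  have hab : r a b := (Finset.mem_filter.mp (hI hj.1)).2
  have hvj := hj.2
  simp only [Finset.mem_insert, Finset.mem_singleton] at hvj
  rw [Finset.mem_product, not_and_or] at hjU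
  rcases hvj with rfl | rfl
  · refine ⟨b, ⟨_, hj.1, by simp⟩, ?_, hab⟩
    rcases hjU with h | h
    · exact absurd hvU h
    · exact h
  · refine ⟨a, ⟨_, hj.1, by simp⟩, ?_, hr _ _ hab⟩
    rcases hjU with h | h
    · exact h
    · exact absurd hvU h

theorem xbound {V : Type*} [DecidableEq V] {r : V → V → Prop} [DecidableRel r]
    (hr : ∀ u v, r u v → r v u) (hirr : ∀ u, ¬ r u u) (m t q : ℕ) (hno : ¬ HasPath r m)
    (L X : Finset V)
    (hq : ∀ S ⊆ L, S.card = t + 1 → ∀ Q ⊆ X, (∀ x ∈ Q, ∀ v ∈ S, r v x) → Q.card ≤ q)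
    (hX : ∀ x ∈ X, t + 1 ≤ (L.filter (fun v => r v x)).card) :
    X.card ≤ (m + 2 ^ m * q) * L.card := by
  by_contra hcon
  push Not at hcon
  have hS : ∀ x, ∃ S : Finset V, x ∈ X → S ⊆ L.filter (fun v => r v x) ∧ S.card = t + 1 := by
    intro x
    by_cases hx : x ∈ X
    · obtain ⟨S, hS⟩ := Finset.exists_subset_card_eq (hX x hx)
      exact ⟨S, fun _ => hS⟩
    · exact ⟨∅, fun h => absurd h hx⟩
  choose S hS using hS
  obtain ⟨I', hI, ⟨i0, hi0⟩, hdeg⟩ := degen (m + 2 ^ m * q) S L X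
    (fun x hx => (hS x hx).1.trans (Finset.filter_subset _ _)) hcon
  have hrS : ∀ x ∈ I', ∀ v ∈ S x, r v x := fun x hx v hv =>
    (Finset.mem_filter.mp ((hS x (hI hx)).1 hv)).2
  apply hno
  have hne : (S i0).Nonempty := Finset.card_pos.mp (by rw [(hS i0 (hI hi0)).2]; omega)
  obtain ⟨v0, hv0⟩ := hne
  refine greedy_path hr {v | ∃ i ∈ I', v ∈ S i} ⟨v0, i0, hi0, hv0⟩ m ?_
  rintro v ⟨i, hi, hv⟩ U hvU hU
  right
  have h1 := hdeg i hi v hv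
  have h2 : ∃ x ∈ I', v ∈ S x ∧ x ∉ U ∧ ¬ S x ⊆ U := by
    by_contra hc
    push Not at hc
    have hsub : I'.filter (fun j => v ∈ S j) ⊆
        U ∪ (U.powerset.filter (fun T => T ⊆ L ∧ T.card = t + 1)).biUnion
          (fun T => X.filter (fun x => ∀ v ∈ T, r v x)) := by
      intro x hx
      rw [Finset.mem_filter] at hx
      rw [Finset.mem_union]
      by_cases hxU : x ∈ U
      · exact Or.inl hxU
      · right
        rw [Finset.mem_biUnion]
        refine ⟨S x, ?_, ?_⟩
        · rw [Finset.mem_filter, Finset.mem_powerset]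
          exact ⟨hc x hx.1 hx.2 hxU, (hS x (hI hx.1)).1.trans (Finset.filter_subset _ _),
            (hS x (hI hx.1)).2⟩
        · rw [Finset.mem_filter]
          exact ⟨hI hx.1, hrS x hx.1⟩
    have h3 := Finset.card_le_card hsub
    have h4 := Finset.card_union_le U ((U.powerset.filter (fun T => T ⊆ L ∧ T.card = t + 1)).biUnion
          (fun T => X.filter (fun x => ∀ v ∈ T, r v x)))
    have h5 : ((U.powerset.filter (fun T => T ⊆ L ∧ T.card = t + 1)).biUnion
          (fun T => X.filter (fun x => ∀ v ∈ T, r v x))).card ≤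
          (U.powerset.filter (fun T => T ⊆ L ∧ T.card = t + 1)).card * q := by
      apply Finset.card_biUnion_le_card_mul
      intro T hT
      rw [Finset.mem_filter] at hT
      exact hq T hT.2.1 hT.2.2 _ (Finset.filter_subset _ _)
        (fun x hx => (Finset.mem_filter.mp hx).2)
    have h6 : (U.powerset.filter (fun T => T ⊆ L ∧ T.card = t + 1)).card ≤ 2 ^ m := by
      refine (Finset.card_filter_le _ _).trans ?_
      rw [Finset.card_powerset]
      exact Nat.pow_le_pow_right (by norm_num) hU
    have h7 := Nat.mul_le_mul_right q h6
    omega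
  obtain ⟨x, hx, hvx, hxU, hSU⟩ := h2
  rw [Finset.not_subset] at hSU
  obtain ⟨w, hw, hwU⟩ := hSU
  have hwx := hrS x hx w hw
  refine ⟨x, hxU, w, ⟨x, hx, hw⟩, hwU, ?_, hrS x hx v hvx, hr _ _ hwx⟩
  rintro rfl
  exact hirr _ hwx

theorem types_lemma {k : ℕ} (hk : 4 ≤ k) (A : Finset (Finset (Fin k)))
    (huniv : Finset.univ ∉ A) (hinter : ∀ I ∈ A, ∀ J ∈ A, I ∩ J ∈ A)
    (hcov : ∀ I : Finset (Fin k), I.card = k - 2 → ∃ J ∈ A, I ⊆ J) :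
    (∃ a : Fin k, ∀ x, x ≠ a → ({a, x} : Finset (Fin k)) ∈ A) ∨
    (∃ z w : Fin k, z ≠ w ∧ ({z} : Finset (Fin k)) ∈ A ∧ ({w} : Finset (Fin k)) ∈ A ∧
      ({z, w} : Finset (Fin k)) ∈ A) := by
  have hpair : ∀ x y : Fin k, x ≠ y → ({x} : Finset (Fin k))ᶜ ∈ A ∨
      ({y} : Finset (Fin k))ᶜ ∈ A ∨ ({x, y} : Finset (Fin k))ᶜ ∈ A := by
    intro x y hxy
    obtain ⟨J, hJ, hsub⟩ := hcov ({x, y} : Finset (Fin k))ᶜ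
      (by rw [Finset.card_compl, Fintype.card_fin, Finset.card_pair hxy])
    have hmem : ∀ v, v ≠ x → v ≠ y → v ∈ J := fun v h1 h2 => hsub (by simp [h1, h2])
    by_cases hx : x ∈ J
    · right; left
      have hy : y ∉ J := by
        intro hy
        apply huniv
        convert hJ
        symm
        rw [Finset.eq_univ_iff_forall]
        intro v
        by_cases h1 : v = x
        · exact h1 ▸ hx
        · by_cases h2 : v = y
          · exact h2 ▸ hy
          · exact hmem v h1 h2
      convert hJ
      ext v
      simp only [Finset.mem_compl, Finset.mem_singleton]
      constructor
      · intro h2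
        by_cases h1 : v = x
        · exact h1 ▸ hx
        · exact hmem v h1 h2
      · rintro h rfl
        exact hy h
    · by_cases hy : y ∈ J
      · left
        convert hJ
        ext v
        simp only [Finset.mem_compl, Finset.mem_singleton]
        constructor
        · intro h2
          by_cases h1 : v = y
          · exact h1 ▸ hy
          · exact hmem v h2 h1
        · rintro h rfl
          exact hx h
      · right; right
        convert hJ
        ext v
        simp only [Finset.mem_compl, Finset.mem_insert, Finset.mem_singleton, not_or]
        constructor
        · rintro ⟨h1, h2⟩
          exact hmem v h1 h2
        · intro h
          constructor
          · rintro rfl; exact hx h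
          · rintro rfl; exact hy h
  by_cases hcase : ∃ a : Fin k, ∀ x, x ≠ a → ({x} : Finset (Fin k))ᶜ ∈ A
  · left
    obtain ⟨a, ha⟩ := hcase
    refine ⟨a, fun x hx => ?_⟩
    have hB : ∀ B : Finset (Fin k), B.Nonempty → a ∉ B → Bᶜ ∈ A := by
      intro B hB
      induction hB using Finset.Nonempty.cons_induction with
      | singleton b =>
        intro h
        exact ha b (by rintro rfl; simp at h)
      | cons b B hb hB ih =>
        intro h
        rw [Finset.mem_cons, not_or] at h
        have := hinter _ (ha b (Ne.symm h.1)) _ (ih h.2)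
        rw [Finset.cons_eq_insert, Finset.insert_eq, Finset.compl_union]
        exact this
    have := hB ({a, x} : Finset (Fin k))ᶜ
      (by
        rw [← Finset.card_pos, Finset.card_compl, Fintype.card_fin]
        have := Finset.card_le_two (a := a) (b := x)
        omega) (by simp)
    rwa [compl_compl] at this
  · right
    push Not at hcase
    obtain ⟨x, -, hx⟩ := hcase ⟨0, by omega⟩
    obtain ⟨y, hyx, hy⟩ := hcase x
    have hxy : ({x, y} : Finset (Fin k))ᶜ ∈ A := by
      rcases hpair x y hyx.symm with h | h | h
      · exact absurd h hx
      · exact absurd h hy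
      · exact h
    have hB : ∀ B : Finset (Fin k), (B ∪ {x, y})ᶜ ∈ A := by
      intro B
      induction B using Finset.induction_on with
      | empty => simpa using hxy
      | insert w B hw ih =>
        by_cases hwx : w = x
        · subst hwx
          convert ih using 2
          ext v; simp
        · rcases hpair x w (Ne.symm hwx) with h | h | h
          · exact absurd h hx
          · convert hinter _ h _ ih using 1
            rw [← Finset.compl_union]
            congr 1
            ext v; simp; tauto
          · convert hinter _ h _ ih using 1
            rw [← Finset.compl_union]
            congr 1
            ext v; simp; tauto
    have hfin : ∀ D : Finset (Fin k), x ∉ D → y ∉ D → D ∈ A := by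
      intro D h1 h2
      convert hB Dᶜ using 1
      ext v
      simp only [Finset.compl_union, compl_compl, Finset.mem_inter, Finset.mem_compl,
        Finset.mem_insert, Finset.mem_singleton, not_or]
      constructor
      · intro hv
        refine ⟨hv, ?_, ?_⟩
        · rintro rfl; exact h1 hv
        · rintro rfl; exact h2 hv
      · exact fun h => h.1
    have hc : 1 < (({x, y} : Finset (Fin k))ᶜ).card := by
      rw [Finset.card_compl, Fintype.card_fin]
      have := Finset.card_le_two (a := x) (b := y)
      omega
    obtain ⟨z, hz, w, hw, hzw⟩ := Finset.one_lt_card.mp hc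
    simp only [Finset.mem_compl, Finset.mem_insert, Finset.mem_singleton, not_or] at hz hw
    refine ⟨z, w, hzw, hfin _ ?_ ?_, hfin _ ?_ ?_, hfin _ ?_ ?_⟩
    all_goals
      simp only [Finset.mem_insert, Finset.mem_singleton, not_or]
      first
        | exact Ne.symm hz.1
        | exact Ne.symm hz.2
        | exact Ne.symm hw.1
        | exact Ne.symm hw.2
        | exact ⟨Ne.symm hz.1, Ne.symm hw.1⟩
        | exact ⟨Ne.symm hz.2, Ne.symm hw.2⟩

def Rst {V : Type*} {k : ℕ} (χ : V → Fin k) (E : Finset V) (I : Finset (Fin k)) : Finset V :=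
  E.filter (fun v => χ v ∈ I)

def Rainbow {V : Type*} {k : ℕ} (χ : V → Fin k) (E : Finset V) : Prop :=
  E.card = k ∧ Set.InjOn χ E

theorem Rainbow.exists_color {V : Type*} {k : ℕ} {χ : V → Fin k} {E : Finset V}
    (h : Rainbow χ E) (c : Fin k) : ∃ v ∈ E, χ v = c := by
  have h1 : E.image χ = Finset.univ := by
    apply Finset.eq_univ_of_card
    rw [Finset.card_image_of_injOn h.2, h.1, Fintype.card_fin]
  have : c ∈ E.image χ := by rw [h1]; exact Finset.mem_univ _
  simpa using this

theorem Rainbow.card_rst {V : Type*} {k : ℕ} {χ : V → Fin k} {E : Finset V}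
    (h : Rainbow χ E) (I : Finset (Fin k)) : (Rst χ E I).card = I.card := by
  have h1 : (Rst χ E I).image χ = I := by
    ext c
    simp only [Rst, Finset.mem_image, Finset.mem_filter]
    constructor
    · rintro ⟨v, hv, rfl⟩; exact hv.2
    · intro hc
      obtain ⟨v, hv, rfl⟩ := h.exists_color c
      exact ⟨v, ⟨hv, hc⟩, rfl⟩
  rw [← Finset.card_image_of_injOn (f := χ) (s := Rst χ E I)
    (h.2.mono (by exact_mod_cast Finset.filter_subset _ _)), h1]

theorem rst_eq_of_subset {V : Type*} {k : ℕ} {χ : V → Fin k} {E E' : Finset V}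
    (h : Rainbow χ E) (h' : Rainbow χ E') {I : Finset (Fin k)} (hs : Rst χ E I ⊆ E') :
    Rst χ E I = Rst χ E' I := by
  apply Finset.eq_of_subset_of_card_le
  · intro v hv
    exact Finset.mem_filter.mpr ⟨hs hv, (Finset.mem_filter.mp hv).2⟩
  · rw [h.card_rst, h'.card_rst]

theorem decomp {V : Type*} [DecidableEq V] {k : ℕ} (s : ℕ) (χ : V → Fin k)
    (A : Finset (Finset (Fin k))) :
    ∀ G : Finset (Finset V), (∀ E ∈ G, Rainbow χ E) →
    ∃ G0 ⊆ G, ∃ R : Finset (Fin k) → Finset (Finset V), (∀ I, R I ⊆ G) ∧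
      G ⊆ G0 ∪ A.biUnion R ∧ (∀ E ∈ G0, ∀ I ∈ A, Ker s G0 (Rst χ E I)) ∧
      ∀ I, ∀ E ∈ R I, ¬ Ker s (R I) (Rst χ E I) := by
  intro G
  induction G using Finset.strongInduction with
  | H G ih =>
    intro hG
    by_cases h : ∀ E ∈ G, ∀ I ∈ A, Ker s G (Rst χ E I)
    · exact ⟨G, Finset.Subset.refl _, fun _ => ∅, by simp, Finset.subset_union_left, h, by simp⟩
    push Not at h
    obtain ⟨E1, hE1, I1, hI1, hker⟩ := h
    set B := Rst χ E1 I1 with hB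
    set T := G.filter (fun E => B ⊆ E) with hT
    set G' := G.filter (fun E => ¬ B ⊆ E) with hG'
    have hss : G' ⊂ G := by
      rw [Finset.ssubset_iff_of_subset (Finset.filter_subset _ _)]
      exact ⟨E1, hE1, by simp [hB, Rst, Finset.filter_subset]⟩
    obtain ⟨G0, h0, R, hR, hcov, hst, hnk⟩ :=
      ih G' hss (fun E hE => hG E (Finset.filter_subset _ _ hE))
    have hTrst : ∀ E ∈ T, Rst χ E I1 = B := by
      intro E hE
      rw [hT, Finset.mem_filter] at hE
      exact (rst_eq_of_subset (hG E1 hE1) (hG E hE.1) hE.2).symm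
    refine ⟨G0, h0.trans hss.subset, Function.update R I1 (R I1 ∪ T), ?_, ?_, hst, ?_⟩
    · intro I
      by_cases hI : I = I1
      · subst hI
        rw [Function.update_self]
        exact Finset.union_subset ((hR _).trans hss.subset) (Finset.filter_subset _ _)
      · rw [Function.update_of_ne hI]
        exact (hR _).trans hss.subset
    · intro E hE
      by_cases hBE : B ⊆ E
      · rw [Finset.mem_union, Finset.mem_biUnion]
        right
        refine ⟨I1, hI1, ?_⟩
        rw [Function.update_self, Finset.mem_union]
        exact Or.inr (Finset.mem_filter.mpr ⟨hE, hBE⟩)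
      · have := hcov (Finset.mem_filter.mpr ⟨hE, hBE⟩)
        rw [Finset.mem_union, Finset.mem_biUnion] at this ⊢
        rcases this with h | ⟨I, hI, h⟩
        · exact Or.inl h
        · refine Or.inr ⟨I, hI, ?_⟩
          by_cases hI : I = I1
          · subst hI
            rw [Function.update_self]
            exact Finset.mem_union_left _ h
          · rwa [Function.update_of_ne hI]
    · intro I E hE
      by_cases hI : I = I1
      swap
      · rw [Function.update_of_ne hI] at hE ⊢
        exact hnk I E hE
      subst hI
      rw [Function.update_self] at hE ⊢
      intro hk
      rw [Finset.mem_union] at hE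
      by_cases hET : E ∈ T
      · rw [hTrst E hET] at hk
        exact hker (hk.mono (Finset.union_subset ((hR _).trans hss.subset)
          (Finset.filter_subset _ _)))
      · have hER := hE.resolve_right hET
        apply hnk I E hER
        intro U hU
        obtain ⟨E', hE', hs', hd⟩ := hk U hU
        refine ⟨E', ?_, hs', hd⟩
        rw [Finset.mem_union] at hE'
        refine hE'.resolve_right ?_
        intro hT'
        have hEG := Finset.mem_filter.mp (hR _ hER)
        have h1 := rst_eq_of_subset (hG E hEG.1) (hG E' (Finset.filter_subset _ _ hT')) hs'
        rw [hTrst E' hT'] at h1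
        apply hEG.2
        rw [← h1]
        exact Finset.filter_subset _ _

def DeadT {V : Type*} {k : ℕ} (χ : V → Fin k) (G : Finset (Finset V)) (I : Finset (Fin k)) :
    Prop :=
  ∀ E ∈ G, ∃ y ∈ E, χ y ∉ I ∧ ∀ E' ∈ G, Rst χ E I ⊆ E' → y ∈ E'

def IsCentre {V : Type*} [DecidableEq V] (s : ℕ) (F : Finset (Finset V)) (E : Finset V) (a : V) :
    Prop := a ∈ E ∧ ∀ x ∈ E, x ≠ a → KAdj s F a x

theorem hom_inter {V : Type*} [DecidableEq V] {k s : ℕ} (hs : 2 * k ≤ s)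
    {χ : V → Fin k} {A : Finset (Finset (Fin k))} {G : Finset (Finset V)}
    (hG : ∀ E ∈ G, Rainbow χ E) (hne : G.Nonempty) (huniv : Finset.univ ∉ A)
    (hst : ∀ E ∈ G, ∀ I ∈ A, Ker s G (Rst χ E I))
    (hdead : ∀ I, I ≠ Finset.univ → I ∉ A → DeadT χ G I) :
    ∀ I ∈ A, ∀ J ∈ A, I ∩ J ∈ A := by
  intro I hI J hJ
  by_contra hIJ
  obtain ⟨E, hE⟩ := hne
  obtain ⟨E1, hE1, hs1, hd1⟩ := hst E hE I hI E (by rw [(hG E hE).1]; omega)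
  obtain ⟨E2, hE2, hs2, hd2⟩ := hst E hE J hJ (E ∪ E1) (by
    have := Finset.card_union_le E E1
    rw [(hG E hE).1, (hG E1 hE1).1] at this
    omega)
  have hu : I ∩ J ≠ Finset.univ := by
    intro h
    apply huniv
    have : I = I ∩ J := by
      apply Finset.Subset.antisymm _ Finset.inter_subset_left
      rw [h]; exact Finset.subset_univ _
    rw [← h, ← this]; exact hI
  obtain ⟨y, hy, hyI, hall⟩ := hdead _ hu hIJ E1 hE1
  have e1 := rst_eq_of_subset (hG E hE) (hG E1 hE1) hs1
  have hy2 : y ∈ E2 := by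
    apply hall E2 hE2
    intro v hv
    simp only [Rst, Finset.mem_filter, Finset.mem_inter] at hv
    have hv1 : v ∈ Rst χ E I := by rw [e1]; exact Finset.mem_filter.mpr ⟨hv.1, hv.2.1⟩
    exact hs2 (Finset.mem_filter.mpr ⟨(Finset.mem_filter.mp hv1).1, hv.2.2⟩)
  have hyJ : y ∈ Rst χ E J := by
    by_contra h
    exact Finset.disjoint_left.mp hd2 (Finset.mem_sdiff.mpr ⟨hy2, h⟩)
      (Finset.mem_union_right _ hy)
  rw [Rst, Finset.mem_filter] at hyJ
  have hyI' : y ∈ Rst χ E I := by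
    by_contra h
    exact Finset.disjoint_left.mp hd1 (Finset.mem_sdiff.mpr ⟨hy, h⟩) hyJ.1
  rw [Rst, Finset.mem_filter] at hyI'
  exact hyI (Finset.mem_inter.mpr ⟨hyI'.2, hyJ.2⟩)

theorem rst_pair {V : Type*} [DecidableEq V] {k : ℕ} {χ : V → Fin k} {E : Finset V}
    (h : Rainbow χ E) {u v : V} (hu : u ∈ E) (hv : v ∈ E) :
    Rst χ E {χ u, χ v} = {u, v} := by
  ext x
  simp only [Rst, Finset.mem_filter, Finset.mem_insert, Finset.mem_singleton]
  constructor
  · rintro ⟨hx, h1 | h1⟩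
    · exact Or.inl (h.2 hx hu h1)
    · exact Or.inr (h.2 hx hv h1)
  · rintro (rfl | rfl)
    · exact ⟨hu, Or.inl rfl⟩
    · exact ⟨hv, Or.inr rfl⟩

theorem hom_bound {V : Type*} [DecidableEq V] [Fintype V] {k s m : ℕ} (hk : 4 ≤ k)
    (hs : 2 * k ≤ s) (hms : m ≤ s)
    {F : Finset (Finset V)} (hno : ¬ HasPath (KAdj s F) m)
    {χ : V → Fin k} {A : Finset (Finset (Fin k))} {G : Finset (Finset V)} (hGF : G ⊆ F)
    (hcen : ∀ E ∈ G, ∀ a, ¬ IsCentre s F E a)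
    (hG : ∀ E ∈ G, Rainbow χ E) (huniv : Finset.univ ∉ A)
    (hst : ∀ E ∈ G, ∀ I ∈ A, Ker s G (Rst χ E I))
    (hdead : ∀ I, I ≠ Finset.univ → I ∉ A → DeadT χ G I) :
    G.card ≤ Fintype.card V ^ (k - 2) := by
  rcases G.eq_empty_or_nonempty with rfl | hne
  · simp
  have hinter := hom_inter hs hG hne huniv hst hdead
  by_cases hcov : ∀ I : Finset (Fin k), I.card = k - 2 → ∃ J ∈ A, I ⊆ J
  · exfalso
    rcases types_lemma hk A huniv hinter hcov with ⟨a, ha⟩ | ⟨z, w, hzw, hz, hw, hp⟩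
    · obtain ⟨E, hE⟩ := hne
      obtain ⟨v, hv, rfl⟩ := (hG E hE).exists_color a
      refine hcen E hE v ⟨hv, fun x hx hxv => ⟨hxv.symm, ?_⟩⟩
      have h1 := hst E hE _ (ha (χ x) (fun h => hxv ((hG E hE).2 hx hv h)))
      rw [rst_pair (hG E hE) hv hx] at h1
      exact h1.mono hGF
    · apply hno
      have step : ∀ z w : Fin k, z ≠ w → {z} ∈ A → {z, w} ∈ A → ∀ E ∈ G, ∀ v ∈ E, χ v = z →
          ∀ U : Finset V, U.card ≤ m →
          ∃ x, (∃ E ∈ G, x ∈ E ∧ χ x = w) ∧ x ∉ U ∧ KAdj s F v x := by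
        intro z w hzw hz hp E hE v hv hvz U hU
        have h1 := hst E hE _ hz
        have h2 : Rst χ E {z} = {v} := by
          have := rst_pair (hG E hE) hv hv
          simpa [hvz] using this
        rw [h2] at h1
        obtain ⟨E', hE', hs', hd'⟩ := h1 U (by omega)
        have hvE' : v ∈ E' := hs' (by simp)
        obtain ⟨x, hx, hxw⟩ := (hG E' hE').exists_color w
        have hvx : v ≠ x := by
          rintro rfl
          exact hzw (hvz.symm.trans hxw)
        refine ⟨x, ⟨E', hE', hx, hxw⟩, ?_, hvx, ?_⟩
        · exact Finset.disjoint_left.mp hd' (Finset.mem_sdiff.mpr ⟨hx, by simpa using hvx.symm⟩)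
        · have h3 := hst E' hE' _ hp
          rw [← hvz, ← hxw, rst_pair (hG E' hE') hvE' hx] at h3
          exact h3.mono hGF
      refine greedy_path (fun u v h => h.symm)
        {v | ∃ E ∈ G, v ∈ E ∧ (χ v = z ∨ χ v = w)} ?_ m ?_
      · obtain ⟨E, hE⟩ := hne
        obtain ⟨v, hv, hvz⟩ := (hG E hE).exists_color z
        exact ⟨v, E, hE, hv, Or.inl hvz⟩
      · rintro v ⟨E, hE, hv, h | h⟩ U hvU hU
        · obtain ⟨x, ⟨E', h1, h2, h3⟩, h4, h5⟩ := step z w hzw hz hp E hE v hv h U hU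
          exact Or.inl ⟨x, ⟨E', h1, h2, Or.inr h3⟩, h4, h5⟩
        · obtain ⟨x, ⟨E', h1, h2, h3⟩, h4, h5⟩ := step w z hzw.symm hw
            (by rwa [Finset.pair_comm]) E hE v hv h U hU
          exact Or.inl ⟨x, ⟨E', h1, h2, Or.inl h3⟩, h4, h5⟩
  · push Not at hcov
    obtain ⟨I, hIc, hI⟩ := hcov
    have hsubE : ∀ E ∈ G, ∀ E' ∈ G, Rst χ E I ⊆ E' → E ⊆ E' := by
      intro E hE E' hE' hsub
      obtain ⟨J, hJ, hmax⟩ := Finset.exists_max_image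
        ((Finset.univ : Finset (Finset (Fin k))).filter (fun J => I ⊆ J ∧ Rst χ E J ⊆ E'))
        Finset.card ⟨I, by simpa using hsub⟩
      simp only [Finset.mem_filter, Finset.mem_univ, true_and] at hJ hmax
      by_cases hJu : J = Finset.univ
      · subst hJu
        simpa [Rst] using hJ.2
      · exfalso
        obtain ⟨y, hy, hyJ, hall⟩ := hdead J hJu (fun h => hI J h hJ.1) E hE
        have hyE' := hall E' hE' hJ.2
        have := hmax (insert (χ y) J) ⟨hJ.1.trans (Finset.subset_insert _ _), by
          intro v hv
          rw [Rst, Finset.mem_filter, Finset.mem_insert] at hv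
          rcases hv with ⟨hv, h | h⟩
          · rw [(hG E hE).2 hv hy h]; exact hyE'
          · exact hJ.2 (Finset.mem_filter.mpr ⟨hv, h⟩)⟩
        rw [Finset.card_insert_of_notMem hyJ] at this
        omega
    have hle : G.card ≤ ((Finset.univ : Finset V).powersetCard (k - 2)).card := by
      apply Finset.card_le_card_of_injOn (fun E => Rst χ E I)
      · intro E hE
        rw [Finset.mem_coe, Finset.mem_powersetCard]
        exact ⟨Finset.subset_univ _, by rw [(hG E hE).card_rst, hIc]⟩
      · intro E hE E' hE' heq
        simp only [] at heq
        apply Finset.eq_of_subset_of_card_le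
        · apply hsubE E hE E' hE'
          rw [heq]; exact Finset.filter_subset _ _
        · rw [(hG E hE).1, (hG E' hE').1]
    refine hle.trans ?_
    rw [Finset.card_powersetCard, Finset.card_univ]
    exact Nat.choose_le_pow _ _

theorem dead_step {V : Type*} [DecidableEq V] {k s : ℕ} {χ : V → Fin k}
    {G : Finset (Finset V)} (hG : ∀ E ∈ G, Rainbow χ E) (I : Finset (Fin k))
    (hnk : ∀ E ∈ G, ¬ Ker s G (Rst χ E I)) :
    ∃ f : Finset V → ℕ, (∀ E ∈ G, f E < s) ∧
      ∀ c, DeadT χ (G.filter (fun E => f E = c)) I := by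
  classical
  have hU : ∀ B : Finset V, ∃ U : Finset V, U.card ≤ s ∧
      ((∃ E ∈ G, Rst χ E I = B) → ∀ E ∈ G, B ⊆ E → ¬ Disjoint (E \ B) U) := by
    intro B
    by_cases h : ∃ E ∈ G, Rst χ E I = B
    · obtain ⟨E, hE, rfl⟩ := h
      have := hnk E hE
      rw [Ker] at this
      push Not at this
      obtain ⟨U, h1, h2⟩ := this
      exact ⟨U, h1, fun _ => h2⟩
    · exact ⟨∅, by simp, fun h' => absurd h' h⟩
  choose U hUc hU using hU
  have hy : ∀ E : Finset V, E ∈ G → ∃ y ∈ E, y ∉ Rst χ E I ∧ y ∈ U (Rst χ E I) := by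
    intro E hE
    have := hU (Rst χ E I) ⟨E, hE, rfl⟩ E hE (Finset.filter_subset _ _)
    rw [Finset.not_disjoint_iff] at this
    obtain ⟨y, h1, h2⟩ := this
    rw [Finset.mem_sdiff] at h1
    exact ⟨y, h1.1, h1.2, h2⟩
  rcases isEmpty_or_nonempty V with hV | hV
  · exact ⟨fun _ => 0, fun E hE => hV.elim (hy E hE).choose,
      fun c E hE => hV.elim (hy E (Finset.filter_subset _ _ hE)).choose⟩
  choose! y hyE hyB hyU using hy
  refine ⟨fun E => if h : y E ∈ U (Rst χ E I) then
    ((U (Rst χ E I)).equivFin ⟨y E, h⟩ : ℕ) else 0, ?_, ?_⟩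
  · intro E hE
    simp only [dif_pos (hyU E hE)]
    exact lt_of_lt_of_le (Fin.is_lt _) (hUc _)
  · intro c E hE
    rw [Finset.mem_filter] at hE
    refine ⟨y E, hyE E hE.1, ?_, ?_⟩
    · intro h
      exact hyB E hE.1 (Finset.mem_filter.mpr ⟨hyE E hE.1, h⟩)
    · intro E' hE' hsub
      rw [Finset.mem_filter] at hE'
      have h1 := rst_eq_of_subset (hG E hE.1) (hG E' hE'.1) hsub
      have h2 := hE.2.trans hE'.2.symm
      have hu := hyU E hE.1
      have hu' := hyU E' hE'.1
      simp only [dif_pos hu, dif_pos hu'] at h2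
      have hyy : y E = y E' := by
        clear hE hE' hsub
        revert h2 hu hu'
        rw [← h1]
        intro hu hu' h2
        have := (U (Rst χ E I)).equivFin.injective (Fin.ext h2)
        exact congrArg Subtype.val this
      rw [hyy]
      exact hyE E' hE'.1

theorem rainbow_bound (k s m : ℕ) (hk : 4 ≤ k) (hs : 2 * k ≤ s) (hms : m ≤ s) :
    ∀ d : ℕ, ∃ N : ℕ, ∀ (n : ℕ) (F : Finset (Finset (Fin n))), ¬ HasPath (KAdj s F) m →
    ∀ (χ : Fin n → Fin k) (A : Finset (Finset (Fin k))) (G : Finset (Finset (Fin n))),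
    A.card ≤ d → G ⊆ F → (∀ E ∈ G, ∀ a, ¬ IsCentre s F E a) → (∀ E ∈ G, Rainbow χ E) →
    Finset.univ ∉ A → (∀ I, I ≠ Finset.univ → I ∉ A → DeadT χ G I) →
    G.card ≤ N * n ^ (k - 2) := by
  intro d
  induction d with
  | zero =>
    refine ⟨1, ?_⟩
    intro n F hno χ A G hA hGF hcen hG huniv hdead
    have hA' : A = ∅ := Finset.card_eq_zero.mp (by omega)
    subst hA'
    have := hom_bound hk hs hms hno hGF hcen hG huniv (by simp) hdead
    simpa using this
  | succ d ih =>
    obtain ⟨N, hN⟩ := ih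
    refine ⟨1 + (d + 1) * (s * N), ?_⟩
    intro n F hno χ A G hA hGF hcen hG huniv hdead
    have hdmono : ∀ G' ⊆ G, ∀ I, DeadT χ G I → DeadT χ G' I := by
      intro G' hG' I h E hE
      obtain ⟨y, h1, h2, h3⟩ := h E (hG' hE)
      exact ⟨y, h1, h2, fun E' hE' => h3 E' (hG' hE')⟩
    obtain ⟨G0, h0, R, hR, hcov, hst, hnk⟩ := decomp s χ A G hG
    have b0 : G0.card ≤ n ^ (k - 2) := by
      have := hom_bound hk hs hms hno (h0.trans hGF) (fun E hE => hcen E (h0 hE))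
        (fun E hE => hG E (h0 hE)) huniv hst (fun I h1 h2 => hdmono _ h0 _ (hdead I h1 h2))
      simpa using this
    have b1 : ∀ I ∈ A, (R I).card ≤ s * (N * n ^ (k - 2)) := by
      intro I hI
      obtain ⟨f, hf, hfd⟩ := dead_step (fun E hE => hG E (hR I hE)) I (hnk I)
      have hcl : ∀ c, ((R I).filter (fun E => f E = c)).card ≤ N * n ^ (k - 2) := by
        intro c
        have hsub : (R I).filter (fun E => f E = c) ⊆ G := (Finset.filter_subset _ _).trans (hR I)
        refine hN n F hno χ (A.erase I) _ ?_ (hsub.trans hGF) (fun E hE => hcen E (hsub hE))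
          (fun E hE => hG E (hsub hE)) (fun h => huniv (Finset.mem_of_mem_erase h)) ?_
        · rw [Finset.card_erase_of_mem hI]; omega
        · intro J hJ hJA
          by_cases hJI : J = I
          · subst hJI; exact hfd c
          · exact hdmono _ hsub _ (hdead J hJ (fun h => hJA (Finset.mem_erase.mpr ⟨hJI, h⟩)))
      have hsub : R I ⊆ (Finset.range s).biUnion (fun c => (R I).filter (fun E => f E = c)) := by
        intro E hE
        rw [Finset.mem_biUnion]
        exact ⟨f E, Finset.mem_range.mpr (hf E hE), Finset.mem_filter.mpr ⟨hE, rfl⟩⟩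
      refine (Finset.card_le_card hsub).trans ?_
      refine (Finset.card_biUnion_le_card_mul _ _ _ (fun c _ => hcl c)).trans ?_
      rw [Finset.card_range]
    have b2 : (A.biUnion R).card ≤ A.card * (s * (N * n ^ (k - 2))) :=
      Finset.card_biUnion_le_card_mul _ _ _ b1
    have b3 := Finset.card_le_card hcov
    have b4 := Finset.card_union_le G0 (A.biUnion R)
    have b5 := Nat.mul_le_mul_right (s * (N * n ^ (k - 2))) hA
    calc G.card ≤ n ^ (k - 2) + (d + 1) * (s * (N * n ^ (k - 2))) := by omega
      _ = _ := by ring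

theorem nocentre_bound (k s m : ℕ) (hk : 4 ≤ k) (hs : 2 * k ≤ s) (hms : m ≤ s) :
    ∃ N : ℕ, ∀ (n : ℕ) (F : Finset (Finset (Fin n))), ¬ HasPath (KAdj s F) m →
    (∀ E ∈ F, E.card = k) → 
    ∀ G ⊆ F, (∀ E ∈ G, ∀ a, ¬ IsCentre s F E a) →
    G.card ≤ N * n ^ (k - 2) := by
  classical
  obtain ⟨N, hN⟩ := rainbow_bound k s m hk hs hms (Fintype.card (Finset (Fin k)))
  refine ⟨k ^ k * N, ?_⟩
  intro n F hno hF G hGF hcen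
  have hb : ∀ χ : Fin n → Fin k, (G.filter (fun E => Rainbow χ E)).card ≤ N * n ^ (k - 2) := by
    intro χ
    refine hN n F hno χ (Finset.univ.erase Finset.univ) _ (Finset.card_le_univ _)
      ((Finset.filter_subset _ _).trans hGF)
      (fun E hE => hcen E (Finset.filter_subset _ _ hE))
      (fun E hE => (Finset.mem_filter.mp hE).2) (by simp) ?_
    intro I h1 h2
    exact absurd (Finset.mem_erase.mpr ⟨h1, Finset.mem_univ _⟩) h2
  have hcount : ∀ E ∈ G, k ^ (n - k) ≤
      ((Finset.univ : Finset (Fin n → Fin k)).filter (fun χ => Rainbow χ E)).card := by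
    intro E hE
    have hc := hF E (hGF hE)
    let e : E ≃ Fin k := E.equivFinOfCardEq hc
    let P : Fin n → Finset (Fin k) := fun v => if h : v ∈ E then {e ⟨v, h⟩} else Finset.univ
    have h1 : (Fintype.piFinset P).card = k ^ (n - k) := by
      rw [Fintype.card_piFinset]
      have : ∀ v, (P v).card = if v ∈ E then 1 else k := by
        intro v
        by_cases h : v ∈ E <;> simp [P, h]
      simp only [this]
      rw [Finset.prod_ite]
      simp only [Finset.prod_const, one_pow, one_mul]
      congr 1
      have := Finset.card_compl E
      rw [hc, Fintype.card_fin] at this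
      rw [← this]
      congr 1
      ext v; simp
    rw [← h1]
    apply Finset.card_le_card
    intro χ hχ
    rw [Fintype.mem_piFinset] at hχ
    refine Finset.mem_filter.mpr ⟨Finset.mem_univ _, hc, ?_⟩
    have hχ' : ∀ v (h : v ∈ E), χ v = e ⟨v, h⟩ := by
      intro v h
      have := hχ v
      simpa [P, h] using this
    intro u hu v hv huv
    rw [hχ' u hu, hχ' v hv] at huv
    exact congrArg Subtype.val (e.injective huv)
  rcases G.eq_empty_or_nonempty with rfl | ⟨E0, hE0⟩
  · simp
  have hkn : k ≤ n := by
    have := Finset.card_le_univ E0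
    rw [hF E0 (hGF hE0), Fintype.card_fin] at this
    exact this
  have hdc : ∑ E ∈ G, ((Finset.univ : Finset (Fin n → Fin k)).filter
      (fun χ => Rainbow χ E)).card =
      ∑ χ : Fin n → Fin k, (G.filter (fun E => Rainbow χ E)).card := by
    simp only [Finset.card_filter]
    exact Finset.sum_comm
  have h1 : G.card * k ^ (n - k) ≤ ∑ E ∈ G, ((Finset.univ : Finset (Fin n → Fin k)).filter
      (fun χ => Rainbow χ E)).card := by
    rw [← smul_eq_mul]
    exact Finset.card_nsmul_le_sum _ _ _ hcount
  have h2 : ∑ χ : Fin n → Fin k, (G.filter (fun E => Rainbow χ E)).card ≤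
      k ^ n * (N * n ^ (k - 2)) := by
    refine (Finset.sum_le_card_nsmul _ _ _ (fun χ _ => hb χ)).trans ?_
    simp
  have h3 : G.card * k ^ (n - k) ≤ (k ^ k * N * n ^ (k - 2)) * k ^ (n - k) := by
    calc G.card * k ^ (n - k) ≤ k ^ n * (N * n ^ (k - 2)) := by rw [hdc] at h1; exact h1.trans h2
      _ = k ^ (k + (n - k)) * (N * n ^ (k - 2)) := by rw [Nat.add_sub_cancel' hkn]
      _ = _ := by rw [pow_add]; ring
  exact Nat.le_of_mul_le_mul_right h3 (by positivity)

theorem count_bound (n j t : ℕ) (hj : 2 ≤ j) (y : ℝ) (hy : 1 ≤ y) (hyn : y ^ (j + 1) = (n : ℝ))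
    (F : Finset (Finset (Fin n))) (hF : ∀ E ∈ F, E.card = j + 2)
    (r : Fin n → Fin n → Prop) [DecidableRel r] (M1 M2 N : ℕ)
    (hpairs : ((Finset.univ : Finset (Fin n × Fin n)).filter (fun p => r p.1 p.2)).card ≤ M1 * n)
    (hcen : ∀ G ⊆ F, (∀ E ∈ G, ∀ a, ¬ (a ∈ E ∧ ∀ x ∈ E, x ≠ a → r a x)) →
      G.card ≤ N * n ^ j)
    (hX : ∀ L X : Finset (Fin n), (∀ x ∈ X, t + 1 ≤ (L.filter (fun v => r v x)).card) →
      X.card ≤ M2 * L.card) :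
    (F.card : ℝ) ≤ t * (n.choose (j + 1)) +
      (N + M1 + M1 ^ 2 + M1 ^ (j + 2) * M2 ^ (j + 1)) * ((n : ℝ) ^ j * y ^ 2) := by
  classical
  have hy0 : 0 < y := by linarith
  set nb : Fin n → Finset (Fin n) := fun v => Finset.univ.filter (fun b => r v b) with hnb
  have hsum : ∑ v, (nb v).card ≤ M1 * n := by
    refine le_trans (le_of_eq ?_) hpairs
    simp only [hnb, Finset.card_filter]
    rw [← Finset.univ_product_univ, Finset.sum_product]
  have hsumR : ∑ v, ((nb v).card : ℝ) ≤ M1 * n := by exact_mod_cast hsum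
  set L : Finset (Fin n) := Finset.univ.filter (fun v => y ^ j ≤ ((nb v).card : ℝ)) with hL
  have hLc : (L.card : ℝ) ≤ M1 * y := by
    have h1 : (L.card : ℝ) * y ^ j ≤ ∑ v ∈ L, ((nb v).card : ℝ) := by
      rw [← nsmul_eq_mul]
      exact Finset.card_nsmul_le_sum _ _ _ (fun v hv => (Finset.mem_filter.mp hv).2)
    have h2 : ∑ v ∈ L, ((nb v).card : ℝ) ≤ ∑ v, ((nb v).card : ℝ) :=
      Finset.sum_le_sum_of_subset_of_nonneg (Finset.subset_univ _) (fun _ _ _ => by positivity)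
    have h3 : (L.card : ℝ) * y ^ j ≤ (M1 * y) * y ^ j := by
      calc _ ≤ (M1 : ℝ) * n := h1.trans (h2.trans hsumR)
        _ = _ := by rw [← hyn]; ring
    exact le_of_mul_le_mul_right h3 (by positivity)
  set X : Finset (Fin n) :=
    Finset.univ.filter (fun x => t + 1 ≤ (L.filter (fun v => r v x)).card) with hXdef
  have hXc : X.card ≤ M2 * L.card := hX L X (fun x hx => (Finset.mem_filter.mp hx).2)
  have hXcR : (X.card : ℝ) ≤ M2 * (M1 * y) := by
    have : (X.card : ℝ) ≤ M2 * L.card := by exact_mod_cast hXc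
    exact this.trans (by gcongr)
  set cen : Finset (Fin n) → Fin n → Prop := fun E a => a ∈ E ∧ ∀ x ∈ E, x ≠ a → r a x with hcendef
  set Fa := F.filter (fun E => ∀ a, ¬ cen E a) with hFa
  set Fb := F.filter (fun E => ∃ a, a ∉ L ∧ cen E a) with hFb
  set Fc := F.filter (fun E => 2 ≤ (E ∩ L).card) with hFc
  set Fe := F.filter (fun E => ∃ a ∈ L, a ∈ E ∧ E.erase a ⊆ X) with hFe
  set Fd := F.filter (fun E => (E ∩ L).card ≤ 1 ∧ ∃ a ∈ L, cen E a ∧ ¬ E.erase a ⊆ X) with hFd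
  have hcover : F ⊆ Fa ∪ Fb ∪ Fc ∪ Fe ∪ Fd := by
    intro E hE
    simp only [Finset.mem_union, hFa, hFb, hFc, hFe, hFd, Finset.mem_filter, hE, true_and]
    by_cases h1 : ∀ a, ¬ cen E a
    · exact Or.inl (Or.inl (Or.inl (Or.inl h1)))
    push Not at h1
    obtain ⟨a, ha⟩ := h1
    by_cases haL : a ∈ L
    swap
    · exact Or.inl (Or.inl (Or.inl (Or.inr ⟨a, haL, ha⟩)))
    by_cases h2 : 2 ≤ (E ∩ L).card
    · exact Or.inl (Or.inl (Or.inr h2))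
    by_cases h3 : E.erase a ⊆ X
    · exact Or.inl (Or.inr ⟨a, haL, ha.1, h3⟩)
    · exact Or.inr ⟨by omega, a, haL, ha, h3⟩
  have bcard : F.card ≤ Fa.card + Fb.card + Fc.card + Fe.card + Fd.card := by
    have e1 := Finset.card_le_card hcover
    have e2 := Finset.card_union_le (Fa ∪ Fb ∪ Fc ∪ Fe) Fd
    have e3 := Finset.card_union_le (Fa ∪ Fb ∪ Fc) Fe
    have e4 := Finset.card_union_le (Fa ∪ Fb) Fc
    have e5 := Finset.card_union_le Fa Fb
    omega
  have ba : Fa.card ≤ N * n ^ j :=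
    hcen Fa (Finset.filter_subset _ _) (fun E hE => (Finset.mem_filter.mp hE).2)
  have bb : (Fb.card : ℝ) ≤ M1 * ((n : ℝ) ^ j * y) := by
    have hsub : Fb ⊆ (Finset.univ.filter (fun a => a ∉ L)).biUnion
        (fun a => ((nb a).powersetCard (j + 1)).image (fun D => insert a D)) := by
      intro E hE
      rw [hFb, Finset.mem_filter] at hE
      obtain ⟨hEF, a, haL, haE, hax⟩ := hE
      rw [Finset.mem_biUnion]
      refine ⟨a, by simp [haL], ?_⟩
      rw [Finset.mem_image]
      refine ⟨E.erase a, ?_, Finset.insert_erase haE⟩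
      rw [Finset.mem_powersetCard]
      refine ⟨?_, by rw [Finset.card_erase_of_mem haE, hF E hEF]; omega⟩
      intro x hx
      rw [Finset.mem_erase] at hx
      exact Finset.mem_filter.mpr ⟨Finset.mem_univ _, hax x hx.2 hx.1⟩
    have h1 : Fb.card ≤ ∑ a ∈ Finset.univ.filter (fun a => a ∉ L), (nb a).card ^ (j + 1) := by
      refine (Finset.card_le_card hsub).trans (Finset.card_biUnion_le.trans ?_)
      refine Finset.sum_le_sum (fun a _ => ?_)
      refine Finset.card_image_le.trans ?_
      rw [Finset.card_powersetCard]
      exact Nat.choose_le_pow _ _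
    have h2 : (Fb.card : ℝ) ≤
        ∑ a ∈ Finset.univ.filter (fun a => a ∉ L), ((nb a).card : ℝ) ^ (j + 1) := by
      exact_mod_cast h1
    have h3 : ∑ a ∈ Finset.univ.filter (fun a => a ∉ L), ((nb a).card : ℝ) ^ (j + 1) ≤
        ∑ a ∈ Finset.univ.filter (fun a => a ∉ L), ((nb a).card : ℝ) * (y ^ j) ^ j := by
      refine Finset.sum_le_sum (fun a ha => ?_)
      have hlt : ((nb a).card : ℝ) ≤ y ^ j := by
        have h := (Finset.mem_filter.mp ha).2
        simp only [hL, Finset.mem_filter, Finset.mem_univ, true_and, not_le] at h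
        exact h.le
      rw [pow_succ, mul_comm]
      gcongr
    have h4 : ∑ a ∈ Finset.univ.filter (fun a => a ∉ L), ((nb a).card : ℝ) * (y ^ j) ^ j ≤
        ∑ a, ((nb a).card : ℝ) * (y ^ j) ^ j :=
      Finset.sum_le_sum_of_subset_of_nonneg (Finset.subset_univ _) (fun _ _ _ => by positivity)
    calc (Fb.card : ℝ) ≤ (∑ a, ((nb a).card : ℝ)) * (y ^ j) ^ j := by
          rw [Finset.sum_mul]; exact h2.trans (h3.trans h4)
      _ ≤ (M1 * n) * (y ^ j) ^ j := by gcongr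
      _ = M1 * ((n : ℝ) ^ j * y) := by rw [← hyn]; ring
  have bc : (Fc.card : ℝ) ≤ (M1 * y) ^ 2 * (n : ℝ) ^ j := by
    have hsub : Fc ⊆ ((L ×ˢ L) ×ˢ (Finset.univ : Finset (Fin n)).powersetCard j).image
        (fun p => insert p.1.1 (insert p.1.2 p.2)) := by
      intro E hE
      rw [hFc, Finset.mem_filter] at hE
      obtain ⟨u, hu, v, hv, huv⟩ := Finset.one_lt_card.mp hE.2
      rw [Finset.mem_inter] at hu hv
      rw [Finset.mem_image]
      have hvE : v ∈ E.erase u := Finset.mem_erase.mpr ⟨huv.symm, hv.1⟩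
      refine ⟨((u, v), (E.erase u).erase v), ?_, ?_⟩
      · simp only [Finset.mem_product, Finset.mem_powersetCard]
        refine ⟨⟨hu.2, hv.2⟩, Finset.subset_univ _, ?_⟩
        rw [Finset.card_erase_of_mem hvE, Finset.card_erase_of_mem hu.1, hF E hE.1]
        omega
      · simp only
        rw [Finset.insert_erase hvE, Finset.insert_erase hu.1]
    have h1 : Fc.card ≤ (L.card * L.card) * n ^ j := by
      refine (Finset.card_le_card hsub).trans (Finset.card_image_le.trans ?_)
      rw [Finset.card_product, Finset.card_product, Finset.card_powersetCard, Finset.card_univ,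
        Fintype.card_fin]
      exact Nat.mul_le_mul_left _ (Nat.choose_le_pow _ _)
    have h2 : (Fc.card : ℝ) ≤ ((L.card : ℝ) * L.card) * (n : ℝ) ^ j := by exact_mod_cast h1
    refine h2.trans ?_
    rw [← sq]
    gcongr
  have be : (Fe.card : ℝ) ≤ (M1 * y) * (M2 * (M1 * y)) ^ (j + 1) := by
    have hsub : Fe ⊆ (L ×ˢ X.powersetCard (j + 1)).image (fun p => insert p.1 p.2) := by
      intro E hE
      rw [hFe, Finset.mem_filter] at hE
      obtain ⟨hEF, a, haL, haE, hs⟩ := hE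
      rw [Finset.mem_image]
      refine ⟨(a, E.erase a), ?_, Finset.insert_erase haE⟩
      simp only [Finset.mem_product, Finset.mem_powersetCard]
      exact ⟨haL, hs, by rw [Finset.card_erase_of_mem haE, hF E hEF]; omega⟩
    have h1 : Fe.card ≤ L.card * X.card ^ (j + 1) := by
      refine (Finset.card_le_card hsub).trans (Finset.card_image_le.trans ?_)
      rw [Finset.card_product, Finset.card_powersetCard]
      exact Nat.mul_le_mul_left _ (Nat.choose_le_pow _ _)
    have h2 : (Fe.card : ℝ) ≤ (L.card : ℝ) * (X.card : ℝ) ^ (j + 1) := by exact_mod_cast h1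
    refine h2.trans ?_
    gcongr
  have bd : Fd.card ≤ t * n.choose (j + 1) := by
    have hLE : ∀ E ∈ Fd, ∀ a ∈ L, a ∈ E → E \ L = E.erase a := by
      intro E hE a haL haE
      rw [hFd, Finset.mem_filter] at hE
      ext x
      rw [Finset.mem_sdiff, Finset.mem_erase]
      constructor
      · rintro ⟨h1, h2⟩
        exact ⟨fun h => h2 (h ▸ haL), h1⟩
      · rintro ⟨h1, h2⟩
        refine ⟨h2, fun h3 => h1 ?_⟩
        exact Finset.card_le_one.mp hE.2.1 _ (Finset.mem_inter.mpr ⟨h2, h3⟩) _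
          (Finset.mem_inter.mpr ⟨haE, haL⟩)
    have hmaps : ∀ E ∈ Fd, E \ L ∈ (Finset.univ : Finset (Fin n)).powersetCard (j + 1) := by
      intro E hE
      have hE' := Finset.mem_filter.mp hE
      obtain ⟨hEF, -, a, haL, haE, -⟩ := hE'
      rw [Finset.mem_powersetCard, hLE E hE a haL haE.1]
      exact ⟨Finset.subset_univ _, by rw [Finset.card_erase_of_mem haE.1, hF E hEF]; omega⟩
    have := Finset.card_le_mul_card_image_of_maps_to hmaps t (by
      intro D hD
      rcases (Fd.filter (fun E => E \ L = D)).eq_empty_or_nonempty with h | ⟨E0, hE0⟩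
      · rw [h]; simp
      rw [Finset.mem_filter] at hE0
      obtain ⟨hE0d, hE0D⟩ := hE0
      obtain ⟨hEF, -, a0, haL0, hcen0, hns⟩ := Finset.mem_filter.mp hE0d
      rw [← hLE E0 hE0d a0 haL0 hcen0.1, hE0D, Finset.not_subset] at hns
      obtain ⟨x0, hx0D, hx0X⟩ := hns
      have hx0 : (L.filter (fun v => r v x0)).card ≤ t := by
        simp only [hXdef, Finset.mem_filter, Finset.mem_univ, true_and, not_le] at hx0X
        omega
      refine le_trans ?_ hx0
      refine le_trans (Finset.card_le_card (t := (L.filter (fun v => r v x0)).image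
        (fun a => insert a D)) ?_) Finset.card_image_le
      intro E hE
      rw [Finset.mem_filter] at hE
      obtain ⟨hEd, hED⟩ := hE
      obtain ⟨hEF, -, a, haL, hcenE, -⟩ := Finset.mem_filter.mp hEd
      rw [Finset.mem_image]
      have hx0E := hx0D
      rw [← hED, Finset.mem_sdiff] at hx0E
      refine ⟨a, Finset.mem_filter.mpr ⟨haL, hcenE.2 x0 hx0E.1 ?_⟩, ?_⟩
      · rintro rfl
        exact hx0E.2 haL
      · rw [← hED, hLE E hEd a haL hcenE.1, Finset.insert_erase hcenE.1])
    rwa [Finset.card_powersetCard, Finset.card_univ, Fintype.card_fin] at this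
  have baR : (Fa.card : ℝ) ≤ N * (n : ℝ) ^ j := by exact_mod_cast ba
  have bdR : (Fd.card : ℝ) ≤ t * (n.choose (j + 1) : ℝ) := by exact_mod_cast bd
  have bR : (F.card : ℝ) ≤ Fa.card + Fb.card + Fc.card + Fe.card + Fd.card := by
    exact_mod_cast bcard
  have hn1 : (1 : ℝ) ≤ n := by rw [← hyn]; exact one_le_pow₀ hy
  have hnj : (n : ℝ) ≤ (n : ℝ) ^ j := le_self_pow₀ hn1 (by omega)
  have hyy : y ≤ y ^ 2 := le_self_pow₀ hy (by norm_num)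
  have hy2 : 1 ≤ y ^ 2 := one_le_pow₀ hy
  have f1 : (N : ℝ) * (n : ℝ) ^ j ≤ N * ((n : ℝ) ^ j * y ^ 2) := by
    gcongr
    exact le_mul_of_one_le_right (by positivity) hy2
  have f2 : (M1 : ℝ) * ((n : ℝ) ^ j * y) ≤ M1 * ((n : ℝ) ^ j * y ^ 2) := by gcongr
  have f3 : ((M1 : ℝ) * y) ^ 2 * (n : ℝ) ^ j = M1 ^ 2 * ((n : ℝ) ^ j * y ^ 2) := by ring
  have f4 : ((M1 : ℝ) * y) * (M2 * (M1 * y)) ^ (j + 1) ≤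
      M1 ^ (j + 2) * M2 ^ (j + 1) * ((n : ℝ) ^ j * y ^ 2) := by
    calc _ = (M1 : ℝ) ^ (j + 2) * M2 ^ (j + 1) * (y ^ (j + 1) * y) := by
          rw [mul_pow, mul_pow]; ring
      _ = (M1 : ℝ) ^ (j + 2) * M2 ^ (j + 1) * (n * y) := by rw [hyn]
      _ ≤ _ := by gcongr
  linarith

/-- Theorem 6.2: for k ≥ 4 and positive ℓ, t, q there are a constant C = C(k,ℓ,t,q) and
n₀ = n₀(k,ℓ) such that for n ≥ n₀ every family of k-sets on [n] with at least
t·C(n,k-1) + C·n^{k-2+2/(k-1)} members contains a linear path of length ℓ or the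
k-blowup of K_{t+1,q}. -/
theorem path_or_bipartite_blowup (k ℓ t q : ℕ) (hk : 4 ≤ k)
    (hl : 1 ≤ ℓ) (ht : 1 ≤ t) (hq : 1 ≤ q) :
    ∃ C : ℝ, 0 < C ∧ ∃ n₀ : ℕ, ∀ n : ℕ, n₀ ≤ n →
      ∀ F : Finset (Finset (Fin n)), (∀ A ∈ F, A.card = k) →
        (t : ℝ) * (n.choose (k - 1)) + C * (n : ℝ) ^ ((k : ℝ) - 2 + 2 / ((k : ℝ) - 1))
          ≤ (F.card : ℝ) →
        ContainsLinearPath k ℓ F ∨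
          ContainsBlowup k (completeBipartiteGraph (Fin (t + 1)) (Fin q)) F := by
  classical
  obtain ⟨j, rfl⟩ : ∃ j, k = j + 2 := ⟨k - 2, by omega⟩
  have hj : 2 ≤ j := by omega
  set s : ℕ := 2 * (j + 2) + ((ℓ + 1) + (j + 2) * ℓ) +
    ((t + 1 + q) + (j + 2) * Fintype.card (Sym2 (Fin (t + 1) ⊕ Fin q))) with hs
  obtain ⟨N, hN⟩ := nocentre_bound (j + 2) s (ℓ + 1) hk (by omega) (by omega)
  set M1 : ℕ := (ℓ + 1) ^ 2 with hM1
  set M2 : ℕ := (ℓ + 1) + 2 ^ (ℓ + 1) * q with hM2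
  refine ⟨(N + M1 + M1 ^ 2 + M1 ^ (j + 2) * M2 ^ (j + 1)) + 1, by positivity, 1, ?_⟩
  intro n hn F hF hcard
  by_contra hcon
  rw [not_or] at hcon
  obtain ⟨hnoP, hnoB⟩ := hcon
  have hno : ¬ HasPath (KAdj s F) (ℓ + 1) := fun h =>
    hnoP (path_of_hasPath hk hF h (by omega))
  have hn0 : (0 : ℝ) < n := by exact_mod_cast hn
  have hn1 : (1 : ℝ) ≤ n := by exact_mod_cast hn
  have hsym : ∀ u v, KAdj s F u v → KAdj s F v u := fun u v h => h.symm
  set y : ℝ := (n : ℝ) ^ ((1 : ℝ) / ((j : ℝ) + 1)) with hy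
  have hy1 : 1 ≤ y := Real.one_le_rpow hn1 (by positivity)
  have hyn : y ^ (j + 1) = (n : ℝ) := by
    rw [hy, ← Real.rpow_natCast, ← Real.rpow_mul hn0.le]
    have : (1 : ℝ) / ((j : ℝ) + 1) * ((j + 1 : ℕ) : ℝ) = 1 := by
      push_cast
      field_simp
    rw [this, Real.rpow_one]
  have hpow : (n : ℝ) ^ (((j + 2 : ℕ) : ℝ) - 2 + 2 / (((j + 2 : ℕ) : ℝ) - 1)) =
      (n : ℝ) ^ j * y ^ 2 := by
    rw [hy, ← Real.rpow_natCast (n := j), ← Real.rpow_natCast (n := 2), ← Real.rpow_mul hn0.le,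
      ← Real.rpow_add hn0]
    congr 1
    push_cast
    have h1 : (j : ℝ) + 2 - 1 = j + 1 := by ring
    rw [h1]
    ring
  have hb := count_bound n j t hj y hy1 hyn F hF (KAdj s F) M1 M2 N
    (by
      have := edges_bound hsym (ℓ + 1) hno
      rwa [Fintype.card_fin] at this)
    (fun G hG h => hN n F hno hF G hG h)
    (by
      intro L X hX
      refine xbound hsym (fun u h => h.1 rfl) (ℓ + 1) t q hno L X ?_ hX
      intro S hSL hSc Q0 hQ0 hQr
      by_contra hlt
      push Not at hlt
      apply hnoB
      obtain ⟨Q, hQs, hQc⟩ := Finset.exists_subset_card_eq hlt.le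
      have eS := S.equivFinOfCardEq hSc
      have eQ := Q.equivFinOfCardEq hQc
      refine blowup_of_kadj hF (fun i => (eS.symm i : Fin n)) (fun i => (eQ.symm i : Fin n))
        (Subtype.val_injective.comp eS.symm.injective)
        (Subtype.val_injective.comp eQ.symm.injective) ?_ (s := s) (by omega)
      intro i i'
      exact hQr _ (hQs (eQ.symm i').2) _ (eS.symm i).2)
  rw [hpow] at hcard
  have e1 : j + 2 - 1 = j + 1 := by omega
  rw [e1] at hcard
  have hpos : 0 < (n : ℝ) ^ j * y ^ 2 := by positivity
  linarith
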